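/- Let X ⊆ ℕ^d be a monotone set. Then for every complex polynomial Q in d variables, ‖Q(B^X)‖ = ‖Q(M_z^X)‖, where the left-hand norm is the operator norm on ℓ²(X,β) and the right-hand norm is the operator norm on H_d(X). -/

import Mathlib

open scoped BigOperators ComplexConjugate

noncomputable section

namespace DruryArveson

/-- Multi-indices. -/
abbrev Idx (d : ℕ) := Fin d → ℕ

/-- The weight `β(n) = |n|!/n!`. -/
def beta (d : ℕ) (n : Idx d) : ℝ :=
  ((∑ j, n j).factorial : ℝ) / ∏ j, ((n j).factorial : ℝ)

/-- standard basis multi-index `e_j`. -/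
def e (d : ℕ) (j : Fin d) : Idx d := fun i => if i = j then 1 else 0

/-- A set `X ⊆ ℕ^d` is monotone if its complement is shift invariant. -/
def MonotoneSet (d : ℕ) (X : Set (Idx d)) : Prop :=
  ∀ n, n ∉ X → ∀ j, n + e d j ∉ X

/-- membership in the Drury–Arveson space (coefficientwise). -/
def MemHd (d : ℕ) (a : Idx d → ℂ) : Prop :=
  Summable fun n => ‖a n‖ ^ 2 / beta d n

/-- the Drury–Arveson norm. -/
def hdNorm (d : ℕ) (a : Idx d → ℂ) : ℝ :=
  Real.sqrt (∑' n, ‖a n‖ ^ 2 / beta d n)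

/-- the Drury–Arveson inner product. -/
def hdInner (d : ℕ) (a b : Idx d → ℂ) : ℂ :=
  ∑' n, a n * conj (b n) / (beta d n : ℂ)

/-- membership in `H_d(X)`. -/
def MemHdX (d : ℕ) (X : Set (Idx d)) (a : Idx d → ℂ) : Prop :=
  (∀ n ∉ X, a n = 0) ∧ MemHd d a

/-- membership in `ℓ²(X, β)`. -/
def MemL2 (d : ℕ) (X : Set (Idx d)) (g : Idx d → ℂ) : Prop :=
  (∀ n ∉ X, g n = 0) ∧ Summable fun n => ‖g n‖ ^ 2 * beta d n

/-- the norm of `ℓ²(ℕ^d, β)`. -/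
def l2Norm (d : ℕ) (g : Idx d → ℂ) : ℝ :=
  Real.sqrt (∑' n, ‖g n‖ ^ 2 * beta d n)

/-- the inner product of `ℓ²(ℕ^d, β)`. -/
def l2Inner (d : ℕ) (g h : Idx d → ℂ) : ℂ :=
  ∑' n, g n * conj (h n) * (beta d n : ℂ)

/-- the compressed backshift `B_j^X = P_X B_j|_{ℓ²(X,β)}`. -/
def BXop (d : ℕ) (X : Set (Idx d)) (j : Fin d) (g : Idx d → ℂ) : Idx d → ℂ :=
  X.indicator fun n => g (n + e d j)

/-- ordered power `(T_1)^{k_1} ∘ ⋯ ∘ (T_d)^{k_d}` of a `d`-tuple of maps. -/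
def opPow (d : ℕ) {α : Type*} (T : Fin d → (α → α)) (k : Idx d) : α → α :=
  (List.ofFn fun j => (T j)^[k j]).foldr (· ∘ ·) id

/-- multiplication by `z_j` on coefficients. -/
def Mop (d : ℕ) (j : Fin d) (a : Idx d → ℂ) : Idx d → ℂ :=
  fun n => if 0 < n j then a (n - e d j) else 0

/-- the compressed multiplication `M_j^X = P_X M_j|_{H_d(X)}`. -/
def MopX (d : ℕ) (X : Set (Idx d)) (j : Fin d) (a : Idx d → ℂ) : Idx d → ℂ :=
  X.indicator (Mop d j a)

/-- the Taylor coefficients of a polynomial of `d` variables. -/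
def Qhat (d : ℕ) (Q : MvPolynomial (Fin d) ℂ) (n : Idx d) : ℂ :=
  Q.coeff (Finsupp.equivFunOnFinite.symm n)

/-- `Q(T)` for a `d`-tuple of maps on the coefficient space. -/
def polyOp (d : ℕ) (Q : MvPolynomial (Fin d) ℂ)
    (T : Fin d → ((Idx d → ℂ) → (Idx d → ℂ))) (a : Idx d → ℂ) : Idx d → ℂ :=
  fun n => ∑ k ∈ Q.support, Q.coeff k * opPow d T (⇑k) a n

/-- operator norm of a map with respect to the `ℓ²(X,β)` norm. -/
def opNormL2 (d : ℕ) (X : Set (Idx d)) (T : (Idx d → ℂ) → (Idx d → ℂ)) : ℝ :=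
  sInf {C | 0 ≤ C ∧ ∀ g, MemL2 d X g → l2Norm d (T g) ≤ C * l2Norm d g}

/-- operator norm of a map with respect to the `H_d(X)` norm. -/
def opNormHdX (d : ℕ) (X : Set (Idx d)) (T : (Idx d → ℂ) → (Idx d → ℂ)) : ℝ :=
  sInf {C | 0 ≤ C ∧ ∀ a, MemHdX d X a → hdNorm d (T a) ≤ C * hdNorm d a}

/-- coefficients of the product `φ · f` of two power series. -/
def mconv (d : ℕ) (φ a : Idx d → ℂ) (m : Idx d) : ℂ :=
  ∑ k ∈ Finset.Iic m, φ k * a (m - k)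

/-- `φ` is a multiplier of `H_d`. -/
def IsMultiplier (d : ℕ) (φ : Idx d → ℂ) : Prop :=
  ∀ a, MemHd d a → MemHd d (mconv d φ a)

/-- the multiplier norm `‖φ‖_{M(H_d)}`. -/
def multNorm (d : ℕ) (φ : Idx d → ℂ) : ℝ :=
  sInf {C | 0 ≤ C ∧ ∀ a, MemHd d a → hdNorm d (mconv d φ a) ≤ C * hdNorm d a}

/-- `A^n = A_1^{n_1} ⋯ A_d^{n_d}` for a tuple of bounded operators. -/
def ApowCLM (d : ℕ) {H : Type*} [NormedAddCommGroup H] [NormedSpace ℂ H]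
    (A : Fin d → H →L[ℂ] H) (n : Idx d) : H →L[ℂ] H :=
  (List.ofFn fun j => A j ^ n j).prod

/-- `Q(A) = ∑ c_k A^k` for a tuple of bounded operators. -/
def QevalCLM (d : ℕ) {H : Type*} [NormedAddCommGroup H] [NormedSpace ℂ H]
    (A : Fin d → H →L[ℂ] H) (Q : MvPolynomial (Fin d) ℂ) : H →L[ℂ] H :=
  ∑ k ∈ Q.support, Q.coeff k • ApowCLM d A ⇑k

/-- monomial `z^n`. -/
def mpow (d : ℕ) (z : Fin d → ℂ) (n : Idx d) : ℂ := ∏ j, z j ^ n j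

/-!
Under the bilinear pairing `∑ n, g n * a n`, the spaces `ℓ²(X, β)` and `H_d(X) = ℓ²(X, β⁻¹)` are
dual to each other and `M_j^X` is the transpose of `B_j^X`. Transposition reverses products, but the
`B_j^X` commute as soon as `X` is order-convex, so `Q(M_z^X)` is the transpose of `Q(B^X)`, and an
operator and its transpose have the same norm.
-/

section Commute

variable {α κ : Type*} {s : Set α} {f g g₁ g₂ : α → α} {F : κ → α → α}

/-- Two self-maps of `α` commute on the subset `s`. The compressed shifts of this file commute only
on functions supported in `X`, so `Function.Commute` does not apply to them. -/
def CommuteOn (f g : α → α) (s : Set α) : Prop :=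
  Set.EqOn (f ∘ g) (g ∘ f) s

theorem CommuteOn.symm (h : CommuteOn f g s) : CommuteOn g f s :=
  Set.EqOn.symm h

theorem CommuteOn.id_right (f : α → α) (s : Set α) : CommuteOn f id s :=
  fun _ _ => rfl

theorem CommuteOn.comp_right (h₁ : CommuteOn f g₁ s) (h₂ : CommuteOn f g₂ s)
    (hg₂ : Set.MapsTo g₂ s s) : CommuteOn f (g₁ ∘ g₂) s :=
  fun _ hx => (h₁ (hg₂ hx)).trans (congrArg g₁ (h₂ hx))

theorem CommuteOn.iterate_right (h : CommuteOn f g s) (hg : Set.MapsTo g s s) (m : ℕ) :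
    CommuteOn f g^[m] s := by
  induction m with
  | zero => exact CommuteOn.id_right f s
  | succ m ih => exact ih.comp_right h hg

theorem CommuteOn.iterate_iterate (h : CommuteOn f g s) (hf : Set.MapsTo f s s)
    (hg : Set.MapsTo g s s) (m k : ℕ) : CommuteOn f^[m] g^[k] s :=
  ((h.iterate_right hg k).symm.iterate_right hf m).symm

theorem mapsTo_foldr_comp (hF : ∀ i, Set.MapsTo (F i) s s) (l : List κ) :
    Set.MapsTo ((l.map F).foldr (· ∘ ·) id) s s := by
  induction l with
  | nil => exact Set.mapsTo_id s
  | cons i l ih => exact (hF i).comp ih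

theorem CommuteOn.foldr_comp_right (h : ∀ i, CommuteOn f (F i) s)
    (hF : ∀ i, Set.MapsTo (F i) s s) (l : List κ) :
    CommuteOn f ((l.map F).foldr (· ∘ ·) id) s := by
  induction l with
  | nil => exact CommuteOn.id_right f s
  | cons i l ih => exact (h i).comp_right ih (mapsTo_foldr_comp hF l)

end Commute

section WeightedL2

variable {ι κ 𝕜 : Type*} [RCLike 𝕜] {X : Set ι} {w : ι → ℝ}

/-- The weighted space `ℓ²(X, w)` of functions on `ι` that vanish outside `X`: `ℓ²(X, β)` is the
case `w = β`, and `H_d(X)`, seen through Taylor coefficients, is the case `w = β⁻¹`. -/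
def weightedL2 (𝕜 : Type*) [RCLike 𝕜] (X : Set ι) (w : ι → ℝ) : Set (ι → 𝕜) :=
  {a | (∀ n ∉ X, a n = 0) ∧ Summable fun n => ‖a n‖ ^ 2 * w n}

/-- The norm of `ℓ²(X, w)`; as for any `tsum`, it is `0` when the defining series diverges. -/
def weightedNorm (w : ι → ℝ) (a : ι → 𝕜) : ℝ :=
  √(∑' n, ‖a n‖ ^ 2 * w n)

theorem weightedNorm_nonneg (w : ι → ℝ) (a : ι → 𝕜) : 0 ≤ weightedNorm w a :=
  Real.sqrt_nonneg _

theorem weightedNorm_sq (hw : ∀ n, 0 ≤ w n) (a : ι → 𝕜) :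
    weightedNorm w a ^ 2 = ∑' n, ‖a n‖ ^ 2 * w n :=
  Real.sq_sqrt (tsum_nonneg fun n => mul_nonneg (sq_nonneg _) (hw n))

theorem zero_mem_weightedL2 : (0 : ι → 𝕜) ∈ weightedL2 𝕜 X w :=
  ⟨fun _ _ => rfl, by simp [summable_zero]⟩

theorem add_mem_weightedL2 (hw : ∀ n, 0 ≤ w n) {a b : ι → 𝕜} (ha : a ∈ weightedL2 𝕜 X w)
    (hb : b ∈ weightedL2 𝕜 X w) : a + b ∈ weightedL2 𝕜 X w := by
  refine ⟨fun n hn => by simp [ha.1 n hn, hb.1 n hn], .of_nonneg_of_le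
    (fun n => mul_nonneg (sq_nonneg _) (hw n)) (fun n => ?_) ((ha.2.add hb.2).mul_left 2)⟩
  calc ‖a n + b n‖ ^ 2 * w n ≤ (2 * (‖a n‖ ^ 2 + ‖b n‖ ^ 2)) * w n :=
        mul_le_mul_of_nonneg_right
          ((pow_le_pow_left₀ (norm_nonneg _) (norm_add_le _ _) 2).trans add_sq_le) (hw n)
    _ = 2 * (‖a n‖ ^ 2 * w n + ‖b n‖ ^ 2 * w n) := by ring

theorem smul_mem_weightedL2 (c : 𝕜) {a : ι → 𝕜} (ha : a ∈ weightedL2 𝕜 X w) :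
    c • a ∈ weightedL2 𝕜 X w := by
  refine ⟨fun n hn => by simp [ha.1 n hn], ?_⟩
  simpa only [Pi.smul_apply, norm_smul, mul_pow, mul_assoc] using ha.2.mul_left (‖c‖ ^ 2)

theorem sum_smul_mem_weightedL2 (hw : ∀ n, 0 ≤ w n) (s : Finset κ) (c : κ → 𝕜) {f : κ → ι → 𝕜}
    (hf : ∀ k ∈ s, f k ∈ weightedL2 𝕜 X w) : ∑ k ∈ s, c k • f k ∈ weightedL2 𝕜 X w :=
  Finset.sum_induction _ (· ∈ weightedL2 𝕜 X w) (fun _ _ => add_mem_weightedL2 hw)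
    zero_mem_weightedL2 fun k hk => smul_mem_weightedL2 (c k) (hf k hk)

theorem summable_mul_and_norm_tsum_mul_le (hw : ∀ n, 0 < w n) {x y : ι → 𝕜}
    (hx : x ∈ weightedL2 𝕜 X w) (hy : y ∈ weightedL2 𝕜 X w⁻¹) :
    (Summable fun n => x n * y n) ∧
      ‖∑' n, x n * y n‖ ≤ weightedNorm w x * weightedNorm w⁻¹ y := by
  have hx_sq (n : ι) : (‖x n‖ * √(w n)) ^ (2 : ℝ) = ‖x n‖ ^ 2 * w n := by
    rw [Real.rpow_two, mul_pow, Real.sq_sqrt (hw n).le]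
  have hy_sq (n : ι) : (‖y n‖ * (√(w n))⁻¹) ^ (2 : ℝ) = ‖y n‖ ^ 2 * w⁻¹ n := by
    rw [Real.rpow_two, mul_pow, inv_pow, Real.sq_sqrt (hw n).le, Pi.inv_apply]
  have hxy (n : ι) : (‖x n‖ * √(w n)) * (‖y n‖ * (√(w n))⁻¹) = ‖x n * y n‖ := by
    rw [norm_mul, mul_mul_mul_comm, mul_inv_cancel₀ (Real.sqrt_pos.mpr (hw n)).ne', mul_one]
  have holder := Real.summable_and_inner_le_Lp_mul_Lq_tsum_of_nonneg
    (f := fun n => ‖x n‖ * √(w n)) (g := fun n => ‖y n‖ * (√(w n))⁻¹)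
    Real.HolderConjugate.two_two (fun n => by positivity) (fun n => by positivity)
    (by simpa only [hx_sq] using hx.2) (by simpa only [hy_sq] using hy.2)
  simp only [hx_sq, hy_sq, hxy, ← Real.sqrt_eq_rpow] at holder
  exact ⟨holder.1.of_norm, (norm_tsum_le_tsum_norm holder.1).trans holder.2⟩

theorem exists_norming_mem_weightedL2_inv (hw : ∀ n, 0 < w n) {b : ι → 𝕜}
    (hb : b ∈ weightedL2 𝕜 X w) :
    ∃ a ∈ weightedL2 𝕜 X w⁻¹, weightedNorm w⁻¹ a = weightedNorm w b ∧
      ‖∑' n, b n * a n‖ = weightedNorm w b ^ 2 := by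
  let a : ι → 𝕜 := fun n => conj (b n) * (w n : 𝕜)
  have ha_sq (n : ι) : ‖a n‖ ^ 2 * w⁻¹ n = ‖b n‖ ^ 2 * w n := by
    have := (hw n).ne'
    simp only [a, norm_mul, RCLike.norm_conj, RCLike.norm_ofReal, mul_pow, sq_abs, Pi.inv_apply]
    field_simp
  have hba (n : ι) : b n * a n = ((‖b n‖ ^ 2 * w n : ℝ) : 𝕜) := by
    simp only [a, ← mul_assoc, RCLike.mul_conj]
    push_cast
    rfl
  refine ⟨a, ⟨fun n hn => by simp [a, hb.1 n hn], by simpa only [ha_sq] using hb.2⟩,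
    by simp only [weightedNorm, ha_sq], ?_⟩
  simp only [hba]
  rw [← RCLike.ofReal_tsum, ← weightedNorm_sq fun n => (hw n).le, RCLike.norm_ofReal,
    abs_of_nonneg (sq_nonneg _)]

end WeightedL2

section Transpose

variable {ι κ 𝕜 : Type*} [RCLike 𝕜] {X : Set ι} {w : ι → ℝ}
  {S S' S₁ S₂ T T₁ T₂ : (ι → 𝕜) → (ι → 𝕜)}

/-- `S` on `ℓ²(X, w)` and `T` on `ℓ²(X, w⁻¹)` are transposes of each other for the bilinear pairing
`∑ n, g n * a n`, under which the two spaces are dual. -/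
structure IsTransposeOn (X : Set ι) (w : ι → ℝ) (S T : (ι → 𝕜) → (ι → 𝕜)) : Prop where
  mapsTo_left : Set.MapsTo S (weightedL2 𝕜 X w) (weightedL2 𝕜 X w)
  mapsTo_right : Set.MapsTo T (weightedL2 𝕜 X w⁻¹) (weightedL2 𝕜 X w⁻¹)
  tsum_mul_eq : ∀ g ∈ weightedL2 𝕜 X w, ∀ a ∈ weightedL2 𝕜 X w⁻¹,
    ∑' n, S g n * a n = ∑' n, g n * T a n

namespace IsTransposeOn

theorem symm (h : IsTransposeOn X w S T) : IsTransposeOn X w⁻¹ T S where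
  mapsTo_left := h.mapsTo_right
  mapsTo_right := by simpa only [inv_inv] using h.mapsTo_left
  tsum_mul_eq a ha g hg := by
    rw [inv_inv] at hg
    simpa only [mul_comm] using (h.tsum_mul_eq g hg a ha).symm

theorem congr_left (h : IsTransposeOn X w S T) (hS : Set.EqOn S S' (weightedL2 𝕜 X w)) :
    IsTransposeOn X w S' T where
  mapsTo_left := h.mapsTo_left.congr hS
  mapsTo_right := h.mapsTo_right
  tsum_mul_eq g hg a ha := hS hg ▸ h.tsum_mul_eq g hg a ha

theorem id (X : Set ι) (w : ι → ℝ) : IsTransposeOn (𝕜 := 𝕜) X w id id where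
  mapsTo_left := Set.mapsTo_id _
  mapsTo_right := Set.mapsTo_id _
  tsum_mul_eq _ _ _ _ := rfl

theorem comp (h₁ : IsTransposeOn X w S₁ T₁) (h₂ : IsTransposeOn X w S₂ T₂) :
    IsTransposeOn X w (S₁ ∘ S₂) (T₂ ∘ T₁) where
  mapsTo_left := h₁.mapsTo_left.comp h₂.mapsTo_left
  mapsTo_right := h₂.mapsTo_right.comp h₁.mapsTo_right
  tsum_mul_eq g hg a ha := (h₁.tsum_mul_eq _ (h₂.mapsTo_left hg) a ha).trans
    (h₂.tsum_mul_eq g hg _ (h₁.mapsTo_right ha))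

theorem iterate (h : IsTransposeOn X w S T) (m : ℕ) : IsTransposeOn X w S^[m] T^[m] := by
  induction m with
  | zero => exact IsTransposeOn.id X w
  | succ m ih => exact Function.iterate_succ' T m ▸ ih.comp h

theorem foldr_comp {S T : κ → (ι → 𝕜) → (ι → 𝕜)} (h : ∀ i, IsTransposeOn X w (S i) (T i))
    (hcomm : ∀ i j, CommuteOn (S i) (S j) (weightedL2 𝕜 X w)) (l : List κ) :
    IsTransposeOn X w ((l.map S).foldr (· ∘ ·) _root_.id)
      ((l.map T).foldr (· ∘ ·) _root_.id) := by
  induction l with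
  | nil => exact IsTransposeOn.id X w
  | cons i l ih =>
    have hcomm_l := CommuteOn.foldr_comp_right (hcomm i) (fun j => (h j).mapsTo_left) l
    exact (ih.comp (h i)).congr_left hcomm_l.symm

theorem opPow {d : ℕ} {S T : Fin d → (ι → 𝕜) → (ι → 𝕜)} (h : ∀ j, IsTransposeOn X w (S j) (T j))
    (hcomm : ∀ i j, CommuteOn (S i) (S j) (weightedL2 𝕜 X w)) (k : Idx d) :
    IsTransposeOn X w (opPow d S k) (opPow d T k) := by
  simp only [DruryArveson.opPow, List.ofFn_eq_map]
  exact foldr_comp (fun j => (h j).iterate (k j))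
    (fun i j => (hcomm i j).iterate_iterate (h i).mapsTo_left (h j).mapsTo_left _ _) _

theorem sum_smul (hw : ∀ n, 0 < w n) (s : Finset κ) (c : κ → 𝕜) {S T : κ → (ι → 𝕜) → (ι → 𝕜)}
    (h : ∀ k ∈ s, IsTransposeOn X w (S k) (T k)) :
    IsTransposeOn X w (fun g => ∑ k ∈ s, c k • S k g) (fun a => ∑ k ∈ s, c k • T k a) where
  mapsTo_left g hg :=
    sum_smul_mem_weightedL2 (fun n => (hw n).le) s c fun k hk => (h k hk).mapsTo_left hg
  mapsTo_right a ha := sum_smul_mem_weightedL2 (fun n => (inv_pos.mpr (hw n)).le) s c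
    fun k hk => (h k hk).mapsTo_right ha
  tsum_mul_eq g hg a ha := by
    have hS (k) (hk : k ∈ s) : Summable fun n => S k g n * a n :=
      (summable_mul_and_norm_tsum_mul_le hw ((h k hk).mapsTo_left hg) ha).1
    have hT (k) (hk : k ∈ s) : Summable fun n => g n * T k a n :=
      (summable_mul_and_norm_tsum_mul_le hw hg ((h k hk).mapsTo_right ha)).1
    simp only [Finset.sum_apply, Pi.smul_apply, smul_eq_mul, Finset.sum_mul, Finset.mul_sum,
      mul_assoc, mul_left_comm (g _)]
    rw [Summable.tsum_finsetSum fun k hk => (hS k hk).mul_left (c k),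
      Summable.tsum_finsetSum fun k hk => (hT k hk).mul_left (c k)]
    refine Finset.sum_congr rfl fun k hk => ?_
    rw [tsum_mul_left, tsum_mul_left, (h k hk).tsum_mul_eq g hg a ha]

theorem polyOp {d : ℕ} {X : Set (Idx d)} {w : Idx d → ℝ} (hw : ∀ n, 0 < w n)
    (Q : MvPolynomial (Fin d) ℂ) {S T : Fin d → (Idx d → ℂ) → (Idx d → ℂ)}
    (h : ∀ j, IsTransposeOn X w (S j) (T j))
    (hcomm : ∀ i j, CommuteOn (S i) (S j) (weightedL2 ℂ X w)) :
    IsTransposeOn X w (polyOp d Q S) (polyOp d Q T) := by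
  have polyOp_eq (R : Fin d → (Idx d → ℂ) → (Idx d → ℂ)) :
      DruryArveson.polyOp d Q R =
        fun a => ∑ k ∈ Q.support, Q.coeff k • DruryArveson.opPow d R k a := by
    ext a n
    simp only [DruryArveson.polyOp, Finset.sum_apply, Pi.smul_apply, smul_eq_mul]
  rw [polyOp_eq S, polyOp_eq T]
  exact sum_smul hw _ _ fun k _ => opPow h hcomm k

theorem weightedNorm_le (hw : ∀ n, 0 < w n) (h : IsTransposeOn X w S T) {C : ℝ} (hC : 0 ≤ C)
    (hT : ∀ a ∈ weightedL2 𝕜 X w⁻¹, weightedNorm w⁻¹ (T a) ≤ C * weightedNorm w⁻¹ a)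
    {g : ι → 𝕜} (hg : g ∈ weightedL2 𝕜 X w) :
    weightedNorm w (S g) ≤ C * weightedNorm w g := by
  obtain ⟨a, ha, ha_norm, ha_pair⟩ := exists_norming_mem_weightedL2_inv hw (h.mapsTo_left hg)
  have hsq : weightedNorm w (S g) ^ 2 ≤ C * weightedNorm w g * weightedNorm w (S g) :=
    calc weightedNorm w (S g) ^ 2 = ‖∑' n, g n * T a n‖ := by
          rw [← ha_pair, h.tsum_mul_eq g hg a ha]
      _ ≤ weightedNorm w g * weightedNorm w⁻¹ (T a) :=
          (summable_mul_and_norm_tsum_mul_le hw hg (h.mapsTo_right ha)).2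
      _ ≤ weightedNorm w g * (C * weightedNorm w⁻¹ a) :=
          mul_le_mul_of_nonneg_left (hT a ha) (weightedNorm_nonneg w g)
      _ = C * weightedNorm w g * weightedNorm w (S g) := by rw [ha_norm]; ring
  rcases (weightedNorm_nonneg w (S g)).eq_or_lt with h_zero | h_pos
  · exact h_zero.symm.trans_le (mul_nonneg hC (weightedNorm_nonneg w g))
  · exact le_of_mul_le_mul_right (sq (weightedNorm w (S g)) ▸ hsq) h_pos

theorem forall_weightedNorm_le_iff (hw : ∀ n, 0 < w n) (h : IsTransposeOn X w S T) {C : ℝ}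
    (hC : 0 ≤ C) :
    (∀ g ∈ weightedL2 𝕜 X w, weightedNorm w (S g) ≤ C * weightedNorm w g) ↔
      ∀ a ∈ weightedL2 𝕜 X w⁻¹, weightedNorm w⁻¹ (T a) ≤ C * weightedNorm w⁻¹ a :=
  ⟨fun hS _ => h.symm.weightedNorm_le (w := w⁻¹) (fun n => inv_pos.mpr (hw n)) hC
    (by simpa only [inv_inv] using hS), fun hT _ => h.weightedNorm_le hw hC hT⟩

end IsTransposeOn

end Transpose

section Shift

variable {d : ℕ} {X : Set (Idx d)} {w : Idx d → ℝ}

theorem Mop_add_e (j : Fin d) (a : Idx d → ℂ) (n : Idx d) : Mop d j a (n + e d j) = a n := by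
  simp [Mop, e]

theorem Mop_eq_zero_of_notMem_range (j : Fin d) (a : Idx d → ℂ) {n : Idx d}
    (hn : n ∉ Set.range (· + e d j)) : Mop d j a n = 0 := by
  refine if_neg fun hj => hn ⟨n - e d j, tsub_add_cancel_of_le fun i => ?_⟩
  rcases eq_or_ne i j with rfl | hij
  · simpa [e] using Nat.succ_le_of_lt hj
  · simp [e, hij]

theorem mapsTo_BXop (hw : ∀ n, 0 ≤ w n) (j : Fin d) (hwj : ∀ n, w n ≤ w (n + e d j)) :
    Set.MapsTo (BXop d X j) (weightedL2 ℂ X w) (weightedL2 ℂ X w) := by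
  intro g hg
  refine ⟨fun n hn => Set.indicator_of_notMem hn _, .of_nonneg_of_le
    (fun n => mul_nonneg (sq_nonneg _) (hw n)) (fun n => ?_)
    (hg.2.comp_injective (add_left_injective (e d j)))⟩
  have hle : ‖BXop d X j g n‖ ≤ ‖g (n + e d j)‖ := norm_indicator_le_norm_self _ _
  exact mul_le_mul (pow_le_pow_left₀ (norm_nonneg _) hle 2) (hwj n) (hw n) (sq_nonneg _)

theorem mapsTo_MopX (hw : ∀ n, 0 ≤ w n) (j : Fin d) (hwj : ∀ n, w (n + e d j) ≤ w n) :
    Set.MapsTo (MopX d X j) (weightedL2 ℂ X w) (weightedL2 ℂ X w) := by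
  intro a ha
  refine ⟨fun n hn => Set.indicator_of_notMem hn _,
    ((add_left_injective (e d j)).summable_iff fun n hn => ?_).mp (.of_nonneg_of_le
      (fun n => mul_nonneg (sq_nonneg _) (hw _)) (fun n => ?_) ha.2)⟩
  · simp [MopX, Mop_eq_zero_of_notMem_range j a hn]
  · have hle : ‖MopX d X j a (n + e d j)‖ ≤ ‖a n‖ :=
      Mop_add_e j a n ▸ norm_indicator_le_norm_self _ _
    exact mul_le_mul (pow_le_pow_left₀ (norm_nonneg _) hle 2) (hwj n) (hw _) (sq_nonneg _)

theorem tsum_BXop_mul (j : Fin d) {g a : Idx d → ℂ} (hg : ∀ n ∉ X, g n = 0)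
    (ha : ∀ n ∉ X, a n = 0) : ∑' n, BXop d X j g n * a n = ∑' n, g n * MopX d X j a n := by
  rw [← (add_left_injective (e d j)).tsum_eq (f := fun n => g n * MopX d X j a n)]
  · refine tsum_congr fun n => ?_
    have hB : BXop d X j g n * a n = g (n + e d j) * a n := by
      by_cases hn : n ∈ X
      · rw [BXop, Set.indicator_of_mem hn]
      · rw [ha n hn, mul_zero, mul_zero]
    have hM : g (n + e d j) * MopX d X j a (n + e d j) = g (n + e d j) * a n := by
      by_cases hn : n + e d j ∈ X
      · rw [MopX, Set.indicator_of_mem hn, Mop_add_e]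
      · rw [hg _ hn, zero_mul, zero_mul]
    exact hB.trans hM.symm
  · refine Function.support_subset_iff'.mpr fun n hn => ?_
    simp [MopX, Mop_eq_zero_of_notMem_range j a hn]

theorem isTransposeOn_BXop_MopX (hw : ∀ n, 0 < w n) (j : Fin d)
    (hwj : ∀ n, w n ≤ w (n + e d j)) : IsTransposeOn X w (BXop d X j) (MopX d X j) where
  mapsTo_left := mapsTo_BXop (fun n => (hw n).le) j hwj
  mapsTo_right := mapsTo_MopX (fun n => (inv_pos.mpr (hw n)).le) j
    fun n => inv_anti₀ (hw n) (hwj n)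
  tsum_mul_eq _ hg _ ha := tsum_BXop_mul j hg.1 ha.1

theorem BXop_BXop (hX : X.OrdConnected) (i j : Fin d) {g : Idx d → ℂ} (hg : ∀ n ∉ X, g n = 0) :
    BXop d X i (BXop d X j g) = X.indicator fun n => g (n + e d i + e d j) := by
  refine Set.indicator_congr fun n hn => ?_
  by_cases hi : n + e d i ∈ X
  · exact Set.indicator_of_mem hi _
  · have hij : n + e d i + e d j ∉ X := fun h =>
      hi (hX.out hn h ⟨le_self_add, le_self_add⟩)
    rw [hg _ hij]
    exact Set.indicator_of_notMem hi _

theorem commuteOn_BXop (hX : X.OrdConnected) (i j : Fin d) :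
    CommuteOn (BXop d X i) (BXop d X j) (weightedL2 ℂ X w) := by
  intro g hg
  simp only [Function.comp_apply, BXop_BXop hX _ _ hg.1, add_right_comm _ (e d j)]

end Shift

section Beta

variable {d : ℕ} {X : Set (Idx d)}

theorem beta_pos (n : Idx d) : 0 < beta d n :=
  div_pos (by positivity) (Finset.prod_pos fun j _ => by positivity)

theorem prod_factorial_add_e (n : Idx d) (j : Fin d) :
    ∏ i, ((n + e d j) i).factorial = (n j + 1) * ∏ i, (n i).factorial := by
  have hfactor (i : Fin d) : ((n + e d j) i).factorial =
      (if i = j then n i + 1 else 1) * (n i).factorial := by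
    by_cases hij : i = j <;> simp [e, hij, Nat.factorial_succ]
  simp only [hfactor, Finset.prod_mul_distrib, Finset.prod_ite_eq', Finset.mem_univ, if_true]

theorem beta_add_e (n : Idx d) (j : Fin d) :
    beta d (n + e d j) = (((∑ i, n i : ℕ) : ℝ) + 1) / (n j + 1) * beta d n := by
  have hsum : ∑ i, (n + e d j) i = ∑ i, n i + 1 := by
    simp [e, Finset.sum_add_distrib]
  simp only [beta, ← Nat.cast_prod, hsum, prod_factorial_add_e, Nat.factorial_succ]
  push_cast
  exact mul_div_mul_comm _ _ _ _

theorem beta_le_beta_add_e (n : Idx d) (j : Fin d) : beta d n ≤ beta d (n + e d j) := by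
  have hle : (n j : ℝ) ≤ ((∑ i, n i : ℕ) : ℝ) :=
    Nat.cast_le.mpr (Finset.single_le_sum (fun i _ => Nat.zero_le (n i)) (Finset.mem_univ j))
  rw [beta_add_e]
  refine le_mul_of_one_le_left (beta_pos n).le ((one_le_div (by positivity)).mpr ?_)
  linarith

theorem MonotoneSet.isLowerSet (hX : MonotoneSet d X) : IsLowerSet X := by
  rw [← isUpperSet_compl]
  refine Set.monotone_mem.mp ((monotone_iff_forall_covBy _).mpr fun n m hnm hn => ?_)
  obtain ⟨j, hj, hne⟩ := Pi.covBy_iff.mp hnm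
  have hm : m = n + e d j := by
    ext i
    rcases eq_or_ne i j with rfl | hij
    · simpa [e] using (Nat.covBy_iff_add_one_eq.mp hj).symm
    · simpa [e, hij] using (hne i hij).symm
  exact hm ▸ hX n hn j

theorem hdNorm_eq_weightedNorm : hdNorm d = weightedNorm (𝕜 := ℂ) (beta d)⁻¹ := by
  ext a
  simp only [hdNorm, weightedNorm, Pi.inv_apply, div_eq_mul_inv]

theorem memHdX_iff_mem_weightedL2 {a : Idx d → ℂ} :
    MemHdX d X a ↔ a ∈ weightedL2 ℂ X (beta d)⁻¹ := by
  simp only [MemHdX, MemHd, weightedL2, Set.mem_ofPred_eq, Pi.inv_apply, div_eq_mul_inv]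

theorem IsTransposeOn.opNormL2_eq_opNormHdX {S T : (Idx d → ℂ) → (Idx d → ℂ)}
    (h : IsTransposeOn X (beta d) S T) : opNormL2 d X S = opNormHdX d X T := by
  simp only [opNormHdX, memHdX_iff_mem_weightedL2, hdNorm_eq_weightedNorm]
  exact congrArg sInf <| Set.ext fun _ =>
    and_congr_right fun hC => h.forall_weightedNorm_le_iff beta_pos hC

theorem norm_QBX_eq_norm_QMX_general (d : ℕ) (X : Set (Idx d)) (hX : X.OrdConnected)
    (Q : MvPolynomial (Fin d) ℂ) :
    opNormL2 d X (polyOp d Q (BXop d X)) = opNormHdX d X (polyOp d Q (MopX d X)) :=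
  (IsTransposeOn.polyOp beta_pos Q
    (fun j => isTransposeOn_BXop_MopX beta_pos j fun n => beta_le_beta_add_e n j)
    (commuteOn_BXop hX)).opNormL2_eq_opNormHdX

end Beta

/-- For a monotone set `X ⊆ ℕ^d` and every complex polynomial `Q` of
`d` variables, `‖Q(B^X)‖ = ‖Q(M_z^X)‖`, the operator norms being taken on `ℓ²(X,β)` and
on `H_d(X)` respectively. -/
theorem norm_QBX_eq_norm_QMX (d : ℕ) (X : Set (Idx d)) (hX : MonotoneSet d X)
    (Q : MvPolynomial (Fin d) ℂ) :
    opNormL2 d X (polyOp d Q (BXop d X)) = opNormHdX d X (polyOp d Q (MopX d X)) :=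
  norm_QBX_eq_norm_QMX_general d X hX.isLowerSet.ordConnected Q

end DruryArveson
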